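/- Let J := (1/π)·∫_0^π cos(cos t) dt, k_a := 2(cos 1 − J)/(cos 1 − sin 1), and k_b := (1 − J)/(1 − sin 1). Then k_a > k_b. -/

import Mathlib

open Real MeasureTheory intervalIntegral

/-!
Put `u = 1 - sin 1`, `v = 1 - cos 1`, so that `0 < u < v`. Then `k_b = (1 - J) / u` and
`k_a = 2 ((1 - J) - v) / (u - v)`, and `k_b < k_a` says exactly that `1 - J` is smaller than the
harmonic mean of `u` and `v`. Integrating the cosine series termwise identifies `J` with the power
series of the Bessel function `J₀` at `1`. This series and those of `sin 1` and `cos 1` alternate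
with decreasing terms, so their partial sums are rational bounds; four terms for `J` and three for
`sin 1` and `cos 1` suffice, with little room to spare.
-/

open Finset Set
open scoped Nat

/-- The Bessel function of the first kind of order `0` on the real line, defined by its integral
representation. -/
noncomputable def besselJZero (x : ℝ) : ℝ :=
  (1 / π) * ∫ t in (0 : ℝ)..π, cos (x * cos t)

lemma integral_cos_pow_two_mul (n : ℕ) :
    ∫ t in (0 : ℝ)..π, cos t ^ (2 * n) = π * (n.centralBinom / 4 ^ n) := by
  induction n with
  | zero => simp
  | succ n ih =>
    have centralBinom_succ :
        ((n : ℝ) + 1) * (n + 1).centralBinom = 2 * (2 * n + 1) * n.centralBinom := by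
      exact_mod_cast n.succ_mul_centralBinom_succ
    calc ∫ t in (0 : ℝ)..π, cos t ^ (2 * (n + 1))
        = (2 * n + 1) / (2 * n + 2) * (π * (n.centralBinom / 4 ^ n)) := by
          rw [mul_add_one, integral_cos_pow, ih, sin_pi, sin_zero]
          push_cast
          ring
      _ = π * ((n + 1).centralBinom / 4 ^ (n + 1)) := by
          rw [pow_succ]
          field_simp
          linear_combination -2 * centralBinom_succ

lemma factorial_two_mul_eq_centralBinom_mul (n : ℕ) :
    (2 * n)! = n.centralBinom * n ! ^ 2 := by
  rw [Nat.centralBinom_eq_two_mul_choose, two_mul, sq, ← mul_assoc,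
    Nat.add_choose_mul_factorial_mul_factorial]

lemma hasSum_integral_cos_comp {f : ℝ → ℝ} {a b : ℝ} (hf : ContinuousOn f (uIcc a b)) :
    HasSum (fun n : ℕ ↦ ∫ t in a..b, (-1) ^ n * f t ^ (2 * n) / (2 * n)!)
      (∫ t in a..b, cos (f t)) := by
  obtain ⟨M, hM⟩ := isCompact_uIcc.exists_bound_of_continuousOn hf
  refine intervalIntegral.hasSum_integral_of_dominated_convergence
    (fun n _ ↦ M ^ (2 * n) / (2 * n)!) (fun n ↦ ?_) (fun n ↦ .of_forall fun t ht ↦ ?_)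
    (.of_forall fun _ _ ↦ (hasSum_cosh M).summable) intervalIntegrable_const
    (.of_forall fun t _ ↦ hasSum_cos (f t))
  · have : ContinuousOn (fun t ↦ (-1) ^ n * f t ^ (2 * n) / (2 * n)!) (uIcc a b) := by fun_prop
    exact (this.mono uIoc_subset_uIcc).aestronglyMeasurable measurableSet_uIoc
  · rw [norm_div, norm_mul, norm_pow, norm_neg, norm_one, one_pow, one_mul, norm_pow,
      RCLike.norm_natCast]
    gcongr
    exact hM t (uIoc_subset_uIcc ht)

theorem hasSum_besselJZero (x : ℝ) :
    HasSum (fun n : ℕ ↦ (-1) ^ n * ((x / 2) ^ n / n !) ^ 2) (besselJZero x) := by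
  have integral_term (n : ℕ) :
      (1 / π) * ∫ t in (0 : ℝ)..π, (-1) ^ n * (x * cos t) ^ (2 * n) / (2 * n)!
        = (-1) ^ n * ((x / 2) ^ n / n !) ^ 2 := by
    have centralBinom_ne_zero : (n.centralBinom : ℝ) ≠ 0 := mod_cast n.centralBinom_ne_zero
    have four_pow : (4 : ℝ) ^ n = (2 ^ n) ^ 2 := by rw [← pow_mul, mul_comm, pow_mul]; norm_num
    simp only [mul_pow, intervalIntegral.integral_div, intervalIntegral.integral_const_mul,
      integral_cos_pow_two_mul, factorial_two_mul_eq_centralBinom_mul, div_pow, four_pow]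
    push_cast
    field_simp
    ring
  have continuousOn_mul_cos : ContinuousOn (fun t ↦ x * cos t) (uIcc 0 π) := by fun_prop
  simpa only [integral_term, besselJZero] using
    (hasSum_integral_cos_comp continuousOn_mul_cos).mul_left (1 / π)

lemma antitone_sq_pow_div_factorial {x : ℝ} (hx : x ^ 2 ≤ 1) :
    Antitone fun n : ℕ ↦ (x ^ n / n !) ^ 2 := by
  refine antitone_nat_of_succ_le fun n ↦ ?_
  have ratio_le_one : x ^ 2 / ((n : ℝ) + 1) ^ 2 ≤ 1 := by
    rw [div_le_one (by positivity)]
    nlinarith [n.cast_nonneg (α := ℝ)]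
  calc (x ^ (n + 1) / (n + 1)!) ^ 2
      = (x ^ n / n !) ^ 2 * (x ^ 2 / ((n : ℝ) + 1) ^ 2) := by
        rw [Nat.factorial_succ]
        push_cast
        field_simp
        ring
    _ ≤ (x ^ n / n !) ^ 2 := mul_le_of_le_one_right (by positivity) ratio_le_one

lemma sum_range_le_besselJZero {x : ℝ} (hx : (x / 2) ^ 2 ≤ 1) (k : ℕ) :
    ∑ n ∈ range (2 * k), (-1) ^ n * ((x / 2) ^ n / n !) ^ 2 ≤ besselJZero x :=
  (antitone_sq_pow_div_factorial hx).alternating_series_le_tendsto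
    (hasSum_besselJZero x).tendsto_sum_nat k

lemma pow_add_two_div_factorial_le {x : ℝ} {m : ℕ} (hx : 0 ≤ x ^ m)
    (hx_sq : x ^ 2 ≤ (m + 1) * (m + 2)) :
    x ^ (m + 2) / (m + 2)! ≤ x ^ m / m ! :=
  calc x ^ (m + 2) / (m + 2)! = x ^ m / m ! * (x ^ 2 / ((m + 1) * (m + 2))) := by
        rw [Nat.factorial_succ, Nat.factorial_succ]
        push_cast
        field_simp
        ring
    _ ≤ x ^ m / m ! :=
        mul_le_of_le_one_right (by positivity) (div_le_one_of_le₀ hx_sq (by positivity))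

lemma cos_le_sum_range {x : ℝ} (hx : x ^ 2 ≤ 2) (k : ℕ) :
    cos x ≤ ∑ n ∈ range (2 * k + 1), (-1) ^ n * (x ^ (2 * n) / (2 * n)!) := by
  have terms_antitone : Antitone fun n : ℕ ↦ x ^ (2 * n) / (2 * n)! := by
    refine antitone_nat_of_succ_le fun n ↦
      pow_add_two_div_factorial_le ((even_two_mul n).pow_nonneg x) ?_
    nlinarith [n.cast_nonneg (α := ℝ)]
  refine terms_antitone.tendsto_le_alternating_series ?_ k
  simpa only [mul_div_assoc] using (hasSum_cos x).tendsto_sum_nat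

lemma sin_le_sum_range {x : ℝ} (hx₀ : 0 ≤ x) (hx : x ^ 2 ≤ 6) (k : ℕ) :
    sin x ≤ ∑ n ∈ range (2 * k + 1), (-1) ^ n * (x ^ (2 * n + 1) / (2 * n + 1)!) := by
  have terms_antitone : Antitone fun n : ℕ ↦ x ^ (2 * n + 1) / (2 * n + 1)! := by
    refine antitone_nat_of_succ_le fun n ↦ pow_add_two_div_factorial_le (by positivity) ?_
    push_cast
    nlinarith [n.cast_nonneg (α := ℝ)]
  refine terms_antitone.tendsto_le_alternating_series ?_ k
  simpa only [mul_div_assoc] using (hasSum_sin x).tendsto_sum_nat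

lemma le_besselJZero_one : 1763 / 2304 ≤ besselJZero 1 := by
  refine le_trans (le_of_eq ?_) (sum_range_le_besselJZero (by norm_num) 2)
  norm_num [sum_range_succ, Nat.factorial]

lemma cos_one_le_thirteen_twentyfourths : cos 1 ≤ 13 / 24 := by
  refine (cos_le_sum_range (by norm_num) 1).trans_eq ?_
  norm_num [sum_range_succ, Nat.factorial]

lemma sin_one_le : sin 1 ≤ 101 / 120 := by
  refine (sin_le_sum_range zero_le_one (by norm_num) 1).trans_eq ?_
  norm_num [sum_range_succ, Nat.factorial]

lemma cos_one_lt_sin_one : cos 1 < sin 1 := by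
  linarith [cos_one_le, sin_ge_sub_cube zero_le_one]

section HarmonicMean

variable {K : Type*} [Field K] [LinearOrder K] [IsStrictOrderedRing K]

lemma div_lt_two_mul_sub_div_sub_iff {u v w : K} (hu : 0 < u) (huv : u < v) :
    w / u < 2 * (w - v) / (u - v) ↔ w < 2 * u * v / (u + v) := by
  have hv : 0 < v := hu.trans huv
  have flip_signs : 2 * (w - v) / (u - v) = 2 * (v - w) / (v - u) := by
    rw [← neg_sub v w, ← neg_sub v u, mul_neg, neg_div_neg_eq]
  rw [flip_signs, div_lt_div_iff₀ hu (sub_pos.2 huv), lt_div_iff₀ (add_pos hu hv)]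
  constructor <;> intro h <;> linarith

lemma two_mul_mul_div_add_le_two_mul_mul_div_add {a b u v : K} (ha : 0 < a) (hb : 0 < b)
    (hau : a ≤ u) (hbv : b ≤ v) :
    2 * a * b / (a + b) ≤ 2 * u * v / (u + v) := by
  have hu : 0 < u := ha.trans_le hau
  have hv : 0 < v := hb.trans_le hbv
  have eq_inv {p q : K} (hp : 0 < p) (hq : 0 < q) : 2 * p * q / (p + q) = 2 / (p⁻¹ + q⁻¹) := by
    field_simp
    ring
  rw [eq_inv ha hb, eq_inv hu hv]
  gcongr

end HarmonicMean

theorem one_sub_besselJZero_one_lt :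
    1 - besselJZero 1 < 2 * (1 - sin 1) * (1 - cos 1) / ((1 - sin 1) + (1 - cos 1)) :=
  calc 1 - besselJZero 1 ≤ 1 - 1763 / 2304 := sub_le_sub_left le_besselJZero_one 1
    _ < 2 * (1 - 101 / 120) * (1 - 13 / 24) / ((1 - 101 / 120) + (1 - 13 / 24)) := by norm_num
    _ ≤ 2 * (1 - sin 1) * (1 - cos 1) / ((1 - sin 1) + (1 - cos 1)) :=
        two_mul_mul_div_add_le_two_mul_mul_div_add (by norm_num) (by norm_num)
          (sub_le_sub_left sin_one_le 1) (sub_le_sub_left cos_one_le_thirteen_twentyfourths 1)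

theorem stmt_17 (J ka kb : ℝ)
    (hJ : J = (1 / π) * ∫ t in (0:ℝ)..π, Real.cos (Real.cos t))
    (hka : ka = 2 * (Real.cos 1 - J) / (Real.cos 1 - Real.sin 1))
    (hkb : kb = (1 - J) / (1 - Real.sin 1)) :
    ka > kb := by
  have J_eq : J = besselJZero 1 := by simp only [hJ, besselJZero, one_mul]
  have one_sub_sin_pos : 0 < 1 - sin 1 := by linarith [sin_one_le]
  have one_sub_sin_lt : 1 - sin 1 < 1 - cos 1 := sub_lt_sub_left cos_one_lt_sin_one 1
  have ka_eq : ka = 2 * ((1 - J) - (1 - cos 1)) / ((1 - sin 1) - (1 - cos 1)) := by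
    rw [hka, sub_sub_sub_cancel_left, sub_sub_sub_cancel_left]
  rw [gt_iff_lt, hkb, ka_eq, div_lt_two_mul_sub_div_sub_iff one_sub_sin_pos one_sub_sin_lt, J_eq]
  exact one_sub_besselJZero_one_lt
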